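/- Let M be a loopless matroid of rank d+1 on the ground set E = {0,1,…,n}, let 1 ≤ k ≤ d, and let ∅ = F_0 ⊊ F_1 ⊊ ⋯ ⊊ F_{k−1} ⊊ F_k = E be a chain of flats of M. For each flat G of M satisfying F_i ⊊ G ⊊ F_{i+1} for some 0 ≤ i ≤ k−1, set w(G) = (−1)^{d−k} · β(M|G/F_i) · β(M|F_{i+1}/G) · ∏_{j ≠ i, 0 ≤ j ≤ k−1} β(M|F_{j+1}/F_j). Then the vector ∑_G w(G)·e_G, summed over all such flats G, lies in the real linear span of the vectors e_{F_1}, …, e_{F_{k−1}}, e_E in ℝ^{n+1}. (This is the balancing condition for the k-th Chern-Schwartz-MacPherson cycle csm_k(M) at the cone corresponding to the chain F_1 ⊊ ⋯ ⊊ F_{k−1}; consequently csm_k(M) is a balanced fan.) -/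

import Mathlib

open Matroid Set

/-- The Möbius function of a collection of "flats" (finsets), defined recursively:
`mob flats F G = 0` if `F ⊄ G`, `1` if `F = G`, and `-∑_{F ⊆ G' ⊊ G} mob flats F G'` otherwise,
the sum being over members `G'` of `flats`. -/
noncomputable def mob {α : Type*} [DecidableEq α] (flats : Finset (Finset α)) :
    Finset α → Finset α → ℤ
  | F, G =>
    if F ⊆ G then
      if F = G then 1
      else - ∑ G' ∈ (flats.filter fun G' => F ⊆ G' ∧ G' ⊂ G).attach,
        mob flats F G'.1
    else 0
termination_by F G => G.card
decreasing_by
  exact Finset.card_lt_card (Finset.mem_filter.mp G'.2).2.2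

/-- The rank of a set `X` in a matroid `M`: the largest cardinality of an independent
subset of `X`. -/
noncomputable def rk {α : Type*} (M : Matroid α) (X : Set α) : ℕ :=
  sSup (Set.ncard '' {I | M.Indep I ∧ I ⊆ X})

/-- An element `e` is a loop of `M` if it belongs to the ground set but to no base. -/
def mLoop {α : Type*} (M : Matroid α) (e : α) : Prop :=
  e ∈ M.E ∧ ∀ B, M.IsBase B → e ∉ B

/-- An element `e` is a coloop of `M` if it belongs to every base. -/
def mColoop {α : Type*} (M : Matroid α) (e : α) : Prop :=
  ∀ B, M.IsBase B → e ∈ B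

/-- A matroid is loopless if it has no loops. -/
def mLoopless {α : Type*} (M : Matroid α) : Prop := ∀ e, ¬ mLoop M e

/-- Contraction of a set `C` in a matroid `M`, defined by duality:
`M / C = (M✶ \ C)✶`, where deletion is restriction to the complement. -/
noncomputable def mContr {α : Type*} (M : Matroid α) (C : Set α) : Matroid α :=
  (M✶ ↾ (M✶.E \ C))✶

/-- The minor `M|G/F` of `M` obtained by restricting to `G` and contracting `F`. -/
noncomputable def mMinor {α : Type*} (M : Matroid α) (G F : Set α) : Matroid α :=
  mContr (M ↾ G) F

open Classical in
/-- The finset of all flats of a matroid on `Fin m`, as finsets. -/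
noncomputable def flatsF {m : ℕ} (M : Matroid (Fin m)) : Finset (Finset (Fin m)) :=
  Finset.univ.filter fun F => M.IsFlat ↑F

open Classical in
/-- The beta invariant `β(M) = (-1)^{r(M)} ∑_{F ∈ L(M)} μ(∅,F) r(F)` of a loopless
matroid `M`; it is `0` if `M` has a loop. -/
noncomputable def betaInv {m : ℕ} (M : Matroid (Fin m)) : ℤ :=
  if mLoopless M then
    (-1) ^ (rk M M.E) * ∑ F ∈ flatsF M, mob (flatsF M) ∅ F * (rk M ↑F : ℤ)
  else 0

/-- The 0/1 indicator vector of a finset `S ⊆ {0,…,m-1}`, as a vector in `ℝ^m`. -/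
def eVec {m : ℕ} (S : Finset (Fin m)) : Fin m → ℝ := fun i => if i ∈ S then 1 else 0

section Moebius

variable {α : Type*} [DecidableEq α] {𝓕 : Finset (Finset α)}

/-- The members of `𝓕` lying between `F` and `G`. -/
def flatInterval (𝓕 : Finset (Finset α)) (F G : Finset α) : Finset (Finset α) :=
  𝓕.filter fun H => F ⊆ H ∧ H ⊆ G

lemma mem_flatInterval {F G H : Finset α} :
    H ∈ flatInterval 𝓕 F G ↔ H ∈ 𝓕 ∧ F ⊆ H ∧ H ⊆ G := by
  simp [flatInterval]

lemma mob_self (F : Finset α) : mob 𝓕 F F = 1 := by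
  rw [mob]; simp

lemma mob_of_not_subset {F G : Finset α} (h : ¬ F ⊆ G) : mob 𝓕 F G = 0 := by
  rw [mob]; simp [h]

lemma mob_of_ssubset {F G : Finset α} (h : F ⊂ G) :
    mob 𝓕 F G = - ∑ H ∈ 𝓕.filter (fun H => F ⊆ H ∧ H ⊂ G), mob 𝓕 F H := by
  rw [mob, if_pos h.subset, if_neg h.ne, Finset.sum_attach _ (fun H => mob 𝓕 F H)]

lemma sum_mob_eq_zero {F G : Finset α} (hG : G ∈ 𝓕) (h : F ⊂ G) :
    ∑ H ∈ flatInterval 𝓕 F G, mob 𝓕 F H = 0 := by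
  have hs : flatInterval 𝓕 F G = insert G (𝓕.filter (fun H => F ⊆ H ∧ H ⊂ G)) := by
    ext H
    simp only [mem_flatInterval, Finset.mem_insert, Finset.mem_filter]
    constructor
    · rintro ⟨h1, h2, h3⟩
      rcases eq_or_ssubset_of_subset h3 with h4 | h4
      · exact Or.inl h4
      · exact Or.inr ⟨h1, h2, h4⟩
    · rintro (rfl | ⟨h1, h2, h3⟩)
      · exact ⟨hG, h.subset, subset_rfl⟩
      · exact ⟨h1, h2, h3.subset⟩
  rw [hs, Finset.sum_insert (by simp), mob_of_ssubset h]
  ring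

lemma flatInterval_self {F : Finset α} (hF : F ∈ 𝓕) : flatInterval 𝓕 F F = {F} := by
  ext H
  simp only [mem_flatInterval, Finset.mem_singleton]
  constructor
  · rintro ⟨_, h2, h3⟩
    exact Finset.Subset.antisymm h3 h2
  · rintro rfl
    exact ⟨hF, subset_rfl, subset_rfl⟩

lemma flatInterval_eq_empty {F G : Finset α} (h : ¬ F ⊆ G) : flatInterval 𝓕 F G = ∅ := by
  ext H
  simp only [mem_flatInterval, Finset.notMem_empty, iff_false]
  rintro ⟨_, h2, h3⟩
  exact h (h2.trans h3)

lemma sum_mob_left {F G : Finset α} (hG : G ∈ 𝓕) :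
    ∑ H ∈ flatInterval 𝓕 F G, mob 𝓕 F H = if F = G then 1 else 0 := by
  split_ifs with h
  · subst h
    rw [flatInterval_self hG, Finset.sum_singleton, mob_self]
  · by_cases hs : F ⊆ G
    · exact sum_mob_eq_zero hG (Finset.ssubset_iff_subset_ne.mpr ⟨hs, h⟩)
    · rw [flatInterval_eq_empty hs, Finset.sum_empty]

lemma sum_flatInterval_mob_eq {F G : Finset α} (f : Finset α → ℤ) :
    ∑ H ∈ flatInterval 𝓕 F G, mob 𝓕 F H * f H =
      ∑ H ∈ 𝓕, mob 𝓕 F H * (if H ⊆ G then f H else 0) := by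
  rw [flatInterval, Finset.sum_filter]
  refine Finset.sum_congr rfl fun H _ => ?_
  by_cases h1 : F ⊆ H
  · by_cases h2 : H ⊆ G <;> simp [h1, h2]
  · simp [h1, mob_of_not_subset h1]

/-- The Möbius function is also a right inverse of the zeta function. -/
lemma sum_mob_right {F G : Finset α} (hF : F ∈ 𝓕) (hG : G ∈ 𝓕) :
    ∑ H ∈ flatInterval 𝓕 F G, mob 𝓕 H G = if F = G then 1 else 0 := by
  let μ : Matrix 𝓕 𝓕 ℤ := fun A B => mob 𝓕 A B
  let ζ : Matrix 𝓕 𝓕 ℤ := fun A B => if A.1 ⊆ B.1 then 1 else 0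
  have hμζ : μ * ζ = 1 := by
    ext A B
    rw [Matrix.mul_apply, Matrix.one_apply]
    have h := sum_mob_left (F := A.1) B.2
    have h2 := sum_flatInterval_mob_eq (𝓕 := 𝓕) (F := A.1) (G := B.1) (fun _ => 1)
    simp only [mul_one] at h2
    rw [h2, ← Finset.sum_coe_sort] at h
    simpa only [μ, ζ, mul_ite, mul_one, mul_zero, SetLike.coe_eq_coe] using h
  have hζμ : (ζ * μ) ⟨F, hF⟩ ⟨G, hG⟩ = (1 : Matrix 𝓕 𝓕 ℤ) ⟨F, hF⟩ ⟨G, hG⟩ := by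
    rw [mul_eq_one_comm.mp hμζ]
  rw [Matrix.mul_apply, Matrix.one_apply] at hζμ
  have h3 : ∑ H ∈ flatInterval 𝓕 F G, mob 𝓕 H G =
      ∑ H ∈ 𝓕, (if F ⊆ H then 1 else 0) * mob 𝓕 H G := by
    rw [flatInterval, Finset.sum_filter]
    refine Finset.sum_congr rfl fun H _ => ?_
    by_cases h2 : H ⊆ G
    · by_cases h1 : F ⊆ H <;> simp [h1, h2]
    · simp [h2, mob_of_not_subset h2]
  rw [h3, ← Finset.sum_coe_sort]
  simpa only [μ, ζ, Subtype.mk.injEq] using hζμ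

/-- The map `J` sends each member `H` of `𝓕` to the least member of `𝓕` containing `H` and `i`,
and `r` increases by one along `J` whenever `i ∉ H`. -/
structure IsRankedJoin (𝓕 : Finset (Finset α)) (r : Finset α → ℤ) (i : α)
    (J : Finset α → Finset α) : Prop where
  mem : ∀ H ∈ 𝓕, J H ∈ 𝓕
  mem_apply : ∀ H ∈ 𝓕, i ∈ J H
  subset_apply : ∀ H ∈ 𝓕, H ⊆ J H
  apply_subset : ∀ H ∈ 𝓕, ∀ K ∈ 𝓕, H ⊆ K → i ∈ K → J H ⊆ K
  rank_apply : ∀ H ∈ 𝓕, r (J H) = r H + if i ∈ H then 0 else 1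

namespace IsRankedJoin

variable {r : Finset α → ℤ} {i : α} {J : Finset α → Finset α} {F G : Finset α}

lemma sum_mob_fiber_eq_zero (hJ : IsRankedJoin 𝓕 r i J) (hiF : i ∉ F) (K : Finset α)
    (hK : K ∈ 𝓕) (hFK : F ⊆ K) (hiK : i ∈ K) :
    ∑ H ∈ (flatInterval 𝓕 F K).filter (fun H => J H = K), mob 𝓕 F H = 0 := by
  induction K using Finset.strongInduction with
  | H K ih =>
    have h0 := sum_mob_eq_zero hK
      (Finset.ssubset_iff_subset_ne.mpr ⟨hFK, fun h => hiF (h ▸ hiK)⟩)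
    have hmaps : ∀ H ∈ flatInterval 𝓕 F K,
        J H ∈ (flatInterval 𝓕 F K).filter (fun L => i ∈ L) := by
      intro H hH
      obtain ⟨h1, h2, h3⟩ := mem_flatInterval.mp hH
      exact Finset.mem_filter.mpr ⟨mem_flatInterval.mpr ⟨hJ.mem H h1,
        h2.trans (hJ.subset_apply H h1), hJ.apply_subset H h1 K hK h3 hiK⟩, hJ.mem_apply H h1⟩
    rw [← Finset.sum_fiberwise_of_maps_to hmaps, Finset.sum_eq_single K] at h0
    · exact h0
    · intro L hL hLK
      obtain ⟨hL, hiL⟩ := Finset.mem_filter.mp hL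
      obtain ⟨h1, h2, h3⟩ := mem_flatInterval.mp hL
      rw [← ih L (Finset.ssubset_iff_subset_ne.mpr ⟨h3, hLK⟩) h1 h2 hiL]
      refine Finset.sum_congr ?_ fun _ _ => rfl
      ext H
      simp only [Finset.mem_filter, mem_flatInterval]
      constructor
      · rintro ⟨⟨a, b, _⟩, e⟩
        exact ⟨⟨a, b, e ▸ hJ.subset_apply H a⟩, e⟩
      · rintro ⟨⟨a, b, c⟩, e⟩
        exact ⟨⟨a, b, c.trans h3⟩, e⟩
    · intro h
      exact absurd (Finset.mem_filter.mpr ⟨mem_flatInterval.mpr ⟨hK, hFK, subset_rfl⟩, hiK⟩) h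

/-- Weisner's theorem, summed against an arbitrary function of the join. -/
lemma sum_mob_mul_eq_zero (hJ : IsRankedJoin 𝓕 r i J) (hiF : i ∉ F) (hG : G ∈ 𝓕)
    (hiG : i ∈ G) (f : Finset α → ℤ) :
    ∑ H ∈ flatInterval 𝓕 F G, mob 𝓕 F H * f (J H) = 0 := by
  have hmaps : ∀ H ∈ flatInterval 𝓕 F G,
      J H ∈ (flatInterval 𝓕 F G).filter (fun L => i ∈ L) := by
    intro H hH
    obtain ⟨h1, h2, h3⟩ := mem_flatInterval.mp hH
    exact Finset.mem_filter.mpr ⟨mem_flatInterval.mpr ⟨hJ.mem H h1,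
      h2.trans (hJ.subset_apply H h1), hJ.apply_subset H h1 G hG h3 hiG⟩, hJ.mem_apply H h1⟩
  rw [← Finset.sum_fiberwise_of_maps_to hmaps]
  refine Finset.sum_eq_zero fun L hL => ?_
  obtain ⟨hL, hiL⟩ := Finset.mem_filter.mp hL
  obtain ⟨h1, h2, h3⟩ := mem_flatInterval.mp hL
  have key := hJ.sum_mob_fiber_eq_zero hiF L h1 h2 hiL
  calc _ = ∑ H ∈ (flatInterval 𝓕 F G).filter (fun H => J H = L), mob 𝓕 F H * f L :=
        Finset.sum_congr rfl fun H hH => by rw [(Finset.mem_filter.mp hH).2]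
    _ = (∑ H ∈ (flatInterval 𝓕 F L).filter (fun H => J H = L), mob 𝓕 F H) * f L := by
        rw [Finset.sum_mul]
        refine Finset.sum_congr ?_ fun _ _ => rfl
        ext H
        simp only [Finset.mem_filter, mem_flatInterval]
        constructor
        · rintro ⟨⟨a, b, _⟩, e⟩
          exact ⟨⟨a, b, e ▸ hJ.subset_apply H a⟩, e⟩
        · rintro ⟨⟨a, b, c⟩, e⟩
          exact ⟨⟨a, b, c.trans h3⟩, e⟩
    _ = 0 := by rw [key, zero_mul]

end IsRankedJoin

/-- The beta invariant of the interval `[F, G]`, up to sign. -/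
noncomputable def intervalBeta (𝓕 : Finset (Finset α)) (r : Finset α → ℤ) (F G : Finset α) : ℤ :=
  ∑ H ∈ flatInterval 𝓕 F G, mob 𝓕 F H * (r H - r F)

lemma intervalBeta_self (r : Finset α → ℤ) {F : Finset α} (hF : F ∈ 𝓕) :
    intervalBeta 𝓕 r F F = 0 := by
  simp [intervalBeta, flatInterval_self hF]

lemma intervalBeta_of_ssubset (r : Finset α → ℤ) {F G : Finset α} (hG : G ∈ 𝓕) (h : F ⊂ G) :
    intervalBeta 𝓕 r F G = ∑ H ∈ flatInterval 𝓕 F G, mob 𝓕 F H * r H := by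
  simp only [intervalBeta, mul_sub, Finset.sum_sub_distrib]
  rw [← Finset.sum_mul, sum_mob_eq_zero hG h]
  ring

lemma sum_flatInterval_comm {F G : Finset α} (f : Finset α → Finset α → ℤ) :
    ∑ K ∈ flatInterval 𝓕 F G, ∑ H ∈ flatInterval 𝓕 F K, f H K =
      ∑ H ∈ flatInterval 𝓕 F G, ∑ K ∈ flatInterval 𝓕 H G, f H K := by
  refine Finset.sum_comm' fun K H => ?_
  simp only [mem_flatInterval]
  constructor
  · rintro ⟨⟨a, b, c⟩, d, e, f⟩
    exact ⟨⟨a, f, c⟩, d, e, f.trans c⟩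
  · rintro ⟨⟨a, b, c⟩, d, e, f⟩
    exact ⟨⟨a, e.trans b, c⟩, d, e, b⟩

lemma sum_intervalBeta (r : Finset α → ℤ) {H G : Finset α} (hH : H ∈ 𝓕) (hG : G ∈ 𝓕)
    (hHG : H ⊆ G) :
    ∑ K ∈ flatInterval 𝓕 H G, intervalBeta 𝓕 r K G = r H - r G := by
  simp only [intervalBeta, mul_sub, Finset.sum_sub_distrib]
  congr 1
  · rw [← sum_flatInterval_comm]
    calc _ = ∑ L ∈ flatInterval 𝓕 H G, (if H = L then 1 else 0) * r L := by
          refine Finset.sum_congr rfl fun L hL => ?_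
          rw [← Finset.sum_mul, sum_mob_right hH (mem_flatInterval.mp hL).1]
      _ = r H := by
          simp only [ite_mul, one_mul, zero_mul, Finset.sum_ite_eq]
          rw [if_pos (mem_flatInterval.mpr ⟨hH, subset_rfl, hHG⟩)]
  · calc _ = ∑ K ∈ flatInterval 𝓕 H G, (if K = G then 1 else 0) * r K := by
          refine Finset.sum_congr rfl fun K _ => ?_
          rw [← Finset.sum_mul, sum_mob_left hG]
      _ = r G := by
          simp only [ite_mul, one_mul, zero_mul, Finset.sum_ite_eq']
          rw [if_pos (mem_flatInterval.mpr ⟨hG, hHG, subset_rfl⟩)]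

namespace IsRankedJoin

variable {r : Finset α → ℤ} {i : α} {J : Finset α → Finset α} {F G : Finset α}

/-- Crapo's formula for the beta invariant in terms of an element `i`. -/
lemma sum_mob_mem_eq_intervalBeta (hJ : IsRankedJoin 𝓕 r i J) (hiF : i ∉ F) (hG : G ∈ 𝓕)
    (hiG : i ∈ G) (hFG : F ⊆ G) :
    ∑ H ∈ flatInterval 𝓕 F G, (if i ∈ H then mob 𝓕 F H else 0) = intervalBeta 𝓕 r F G := by
  have hs : F ⊂ G := Finset.ssubset_iff_subset_ne.mpr ⟨hFG, fun h => hiF (h ▸ hiG)⟩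
  have h1 := hJ.sum_mob_mul_eq_zero hiF hG hiG r
  have h2 := sum_mob_eq_zero hG hs
  rw [intervalBeta_of_ssubset r hG hs]
  have h3 : ∑ H ∈ flatInterval 𝓕 F G, mob 𝓕 F H * r (J H) =
      ∑ H ∈ flatInterval 𝓕 F G, mob 𝓕 F H * r H + ∑ H ∈ flatInterval 𝓕 F G, mob 𝓕 F H -
      ∑ H ∈ flatInterval 𝓕 F G, (if i ∈ H then mob 𝓕 F H else 0) := by
    rw [← Finset.sum_add_distrib, ← Finset.sum_sub_distrib]
    refine Finset.sum_congr rfl fun H hH => ?_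
    rw [hJ.rank_apply H (mem_flatInterval.mp hH).1]
    split_ifs <;> ring
  linarith

lemma two_mul_sum_mob_mem_mul_rank (hJ : IsRankedJoin 𝓕 r i J) (hiF : i ∉ F) (hG : G ∈ 𝓕)
    (hiG : i ∈ G) (hFG : F ⊆ G) :
    2 * ∑ H ∈ flatInterval 𝓕 F G, (if i ∈ H then mob 𝓕 F H * r H else 0) =
      ∑ H ∈ flatInterval 𝓕 F G, mob 𝓕 F H * (r H) ^ 2 + intervalBeta 𝓕 r F G := by
  have hs : F ⊂ G := Finset.ssubset_iff_subset_ne.mpr ⟨hFG, fun h => hiF (h ▸ hiG)⟩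
  have h1 := hJ.sum_mob_mul_eq_zero hiF hG hiG (fun K => (r K) ^ 2)
  have h2 := sum_mob_eq_zero hG hs
  have h3 := hJ.sum_mob_mem_eq_intervalBeta hiF hG hiG hFG
  have h4 := intervalBeta_of_ssubset r hG hs
  have h5 : ∑ H ∈ flatInterval 𝓕 F G, mob 𝓕 F H * r (J H) ^ 2 =
      ∑ H ∈ flatInterval 𝓕 F G, mob 𝓕 F H * (r H) ^ 2 +
      2 * ∑ H ∈ flatInterval 𝓕 F G, mob 𝓕 F H * r H + ∑ H ∈ flatInterval 𝓕 F G, mob 𝓕 F H -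
      2 * ∑ H ∈ flatInterval 𝓕 F G, (if i ∈ H then mob 𝓕 F H * r H else 0) -
      ∑ H ∈ flatInterval 𝓕 F G, (if i ∈ H then mob 𝓕 F H else 0) := by
    simp only [Finset.mul_sum]
    rw [← Finset.sum_add_distrib, ← Finset.sum_add_distrib, ← Finset.sum_sub_distrib,
      ← Finset.sum_sub_distrib]
    refine Finset.sum_congr rfl fun H hH => ?_
    rw [hJ.rank_apply H (mem_flatInterval.mp hH).1]
    split_ifs <;> ring
  linarith

/-- The right-hand side does not depend on `i`. -/
lemma two_mul_sum_intervalBeta_mul (hJ : IsRankedJoin 𝓕 r i J) (hiF : i ∉ F) (hG : G ∈ 𝓕)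
    (hiG : i ∈ G) (hFG : F ⊆ G) :
    2 * ∑ K ∈ 𝓕.filter (fun K => F ⊂ K ∧ K ⊂ G),
        (if i ∈ K then intervalBeta 𝓕 r F K * intervalBeta 𝓕 r K G else 0) =
      ∑ H ∈ flatInterval 𝓕 F G, mob 𝓕 F H * (r H) ^ 2 +
        (1 - 2 * r G) * intervalBeta 𝓕 r F G := by
  have h1 : ∑ K ∈ 𝓕.filter (fun K => F ⊂ K ∧ K ⊂ G),
        (if i ∈ K then intervalBeta 𝓕 r F K * intervalBeta 𝓕 r K G else 0) =
      ∑ K ∈ flatInterval 𝓕 F G,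
        (if i ∈ K then intervalBeta 𝓕 r F K * intervalBeta 𝓕 r K G else 0) := by
    refine Finset.sum_subset ?_ ?_
    · intro K hK
      obtain ⟨a, b, c⟩ := Finset.mem_filter.mp hK
      exact mem_flatInterval.mpr ⟨a, b.subset, c.subset⟩
    · intro K hK hK'
      obtain ⟨a, b, c⟩ := mem_flatInterval.mp hK
      split_ifs with hi
      · have hFK : F ⊂ K := Finset.ssubset_iff_subset_ne.mpr ⟨b, fun h => hiF (h ▸ hi)⟩
        have : K = G := by
          by_contra hne
          exact hK' (Finset.mem_filter.mpr
            ⟨a, hFK, Finset.ssubset_iff_subset_ne.mpr ⟨c, hne⟩⟩)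
        rw [this, intervalBeta_self r hG, mul_zero]
      · rfl
  have h2 : ∀ K ∈ flatInterval 𝓕 F G,
      (if i ∈ K then intervalBeta 𝓕 r F K * intervalBeta 𝓕 r K G else 0) =
      ∑ H ∈ flatInterval 𝓕 F K, (if i ∈ H then mob 𝓕 F H else 0) * intervalBeta 𝓕 r K G := by
    intro K hK
    obtain ⟨a, b, c⟩ := mem_flatInterval.mp hK
    rw [← Finset.sum_mul]
    split_ifs with hi
    · rw [hJ.sum_mob_mem_eq_intervalBeta hiF a hi b]
    · rw [Finset.sum_eq_zero, zero_mul]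
      intro H hH
      exact if_neg fun h => hi ((mem_flatInterval.mp hH).2.2 h)
  have h3 : ∀ H ∈ flatInterval 𝓕 F G,
      ∑ K ∈ flatInterval 𝓕 H G, (if i ∈ H then mob 𝓕 F H else 0) * intervalBeta 𝓕 r K G =
      (if i ∈ H then mob 𝓕 F H * r H else 0) - r G * (if i ∈ H then mob 𝓕 F H else 0) := by
    intro H hH
    obtain ⟨a, b, c⟩ := mem_flatInterval.mp hH
    rw [← Finset.mul_sum, sum_intervalBeta r a hG c]
    split_ifs <;> ring
  rw [h1, Finset.sum_congr rfl h2, sum_flatInterval_comm, Finset.sum_congr rfl h3,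
    Finset.sum_sub_distrib, ← Finset.mul_sum, hJ.sum_mob_mem_eq_intervalBeta hiF hG hiG hFG]
  linarith [hJ.two_mul_sum_mob_mem_mul_rank hiF hG hiG hFG]

end IsRankedJoin

end Moebius

section Minors

variable {m : ℕ} {M : Matroid (Fin m)}

lemma mMinor_eq (M : Matroid (Fin m)) (G F : Set (Fin m)) : mMinor M G F = (M ↾ G) ／ F := rfl

lemma mem_flatsF {F : Finset (Fin m)} : F ∈ flatsF M ↔ M.IsFlat ↑F := by
  simp [flatsF]

lemma cast_rk_eq_eRk (M : Matroid (Fin m)) (X : Set (Fin m)) : (rk M X : ℕ∞) = M.eRk X := by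
  obtain ⟨I, hI⟩ := M.exists_isBasis' X
  have hmax : IsGreatest (Set.ncard '' {I | M.Indep I ∧ I ⊆ X}) I.ncard := by
    refine ⟨⟨I, ⟨hI.indep, hI.subset⟩, rfl⟩, ?_⟩
    rintro _ ⟨K, ⟨hK, hKX⟩, rfl⟩
    have h := hK.encard_le_eRk_of_subset hKX
    rw [← hI.encard_eq_eRk] at h
    rw [← K.toFinite.cast_ncard_eq, ← I.toFinite.cast_ncard_eq] at h
    exact_mod_cast h
  rw [rk, hmax.csSup_eq, I.toFinite.cast_ncard_eq, hI.encard_eq_eRk]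

lemma rk_eq_ncard {I X : Set (Fin m)} (h : M.IsBasis I X) : rk M X = I.ncard := by
  have h1 := cast_rk_eq_eRk M X
  rw [← h.encard_eq_eRk, ← I.toFinite.cast_ncard_eq] at h1
  exact_mod_cast h1

lemma rk_closure (M : Matroid (Fin m)) (X : Set (Fin m)) : rk M (M.closure X) = rk M X := by
  have h := M.eRk_closure_eq X
  rw [← cast_rk_eq_eRk, ← cast_rk_eq_eRk] at h
  exact_mod_cast h

lemma rk_insert_of_notMem_closure {X : Set (Fin m)} {i : Fin m} (hi : i ∈ M.E \ M.closure X) :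
    rk M (insert i X) = rk M X + 1 := by
  have h := eRk_insert_eq_add_one hi
  rw [← cast_rk_eq_eRk, ← cast_rk_eq_eRk] at h
  exact_mod_cast h

open Classical in
lemma isRankedJoin_closure_insert {i : Fin m} (hi : i ∈ M.E) :
    IsRankedJoin (flatsF M) (fun H => (rk M ↑H : ℤ)) i
      (fun H => (M.closure (insert i (H : Set (Fin m)))).toFinset) where
  mem H _ := by simp [mem_flatsF]
  mem_apply H _ := by
    simpa using M.mem_closure_of_mem' (Set.mem_insert i _) hi
  subset_apply H hH := by
    intro x hx
    have hxE := (mem_flatsF.mp hH).subset_ground (Finset.mem_coe.mpr hx)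
    simpa using M.mem_closure_of_mem' (Set.mem_insert_of_mem i (Finset.mem_coe.mpr hx)) hxE
  apply_subset H _ K hK hHK hiK := by
    intro x hx
    have hsub : insert i (H : Set (Fin m)) ⊆ K :=
      Set.insert_subset (Finset.mem_coe.mpr hiK) (Finset.coe_subset.mpr hHK)
    have h := M.closure_subset_closure hsub (by simpa using hx)
    rw [(mem_flatsF.mp hK).closure] at h
    exact h
  rank_apply H hH := by
    have hcl := (mem_flatsF.mp hH).closure
    simp only [Set.coe_toFinset, rk_closure]
    split_ifs with h
    · rw [Set.insert_eq_of_mem (Finset.mem_coe.mpr h)]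
      ring
    · rw [rk_insert_of_notMem_closure ⟨hi, by rw [hcl]; exact_mod_cast h⟩]
      push_cast
      ring

variable {F G : Finset (Fin m)}

lemma mMinor_isFlat_iff (hF : M.IsFlat ↑F) (hG : M.IsFlat ↑G) (hFG : F ⊆ G)
    {X : Set (Fin m)} :
    (mMinor M ↑G ↑F).IsFlat X ↔ M.IsFlat (X ∪ ↑F) ∧ X ⊆ ↑G \ ↑F := by
  have hFG' : (F : Set (Fin m)) ⊆ G := Finset.coe_subset.mpr hFG
  have hcl : X ⊆ ↑G → (mMinor M ↑G ↑F).closure X = M.closure (X ∪ ↑F) \ ↑F := by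
    intro hX
    have hXF : X ∪ ↑F ⊆ (G : Set (Fin m)) := Set.union_subset hX hFG'
    rw [mMinor_eq, contract_closure_eq, M.restrict_closure_eq hXF hG.subset_ground,
      Set.inter_eq_left.mpr]
    exact (M.closure_subset_closure hXF).trans hG.closure.subset
  constructor
  · intro h
    have hX : X ⊆ ↑G \ ↑F := h.subset_ground
    have hX' := hX.trans Set.sdiff_subset
    refine ⟨?_, hX⟩
    have h1 := h.closure
    rw [hcl hX'] at h1
    rw [isFlat_iff_closure_eq]
    have h2 : (F : Set (Fin m)) ⊆ M.closure (X ∪ ↑F) :=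
      hF.closure.symm.subset.trans (M.closure_subset_closure Set.subset_union_right)
    rw [← Set.sdiff_union_of_subset h2, h1]
  · rintro ⟨h, hX⟩
    rw [isFlat_iff_closure_eq, hcl (hX.trans Set.sdiff_subset), h.closure, Set.union_sdiff_right]
    exact (Set.subset_sdiff.mp hX).2.sdiff_eq_left

lemma mMinor_ground : (mMinor M ↑G ↑F).E = (G : Set (Fin m)) \ ↑F := rfl

lemma mMinor_loopless (hF : M.IsFlat ↑F) (hG : M.IsFlat ↑G) (hFG : F ⊆ G) :
    mLoopless (mMinor M ↑G ↑F) := by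
  rintro e ⟨he, hB⟩
  have hflat : (mMinor M ↑G ↑F).IsFlat ∅ := by
    rw [mMinor_isFlat_iff hF hG hFG]
    simpa using hF
  have hloop : (mMinor M ↑G ↑F).IsLoop e := by
    rw [isLoop_iff_forall_notMem_isBase]
    exact hB
  exact hloop.mem_of_isFlat hflat

lemma rk_mMinor_add (hF : M.IsFlat ↑F) (hG : M.IsFlat ↑G) (hFG : F ⊆ G)
    {X : Set (Fin m)} (hX : X ⊆ ↑G \ ↑F) :
    rk (mMinor M ↑G ↑F) X + rk M ↑F = rk M (X ∪ ↑F) := by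
  have hFG' : (F : Set (Fin m)) ⊆ G := Finset.coe_subset.mpr hFG
  have hXF : X ∪ ↑F ⊆ (G : Set (Fin m)) := Set.union_subset (hX.trans Set.sdiff_subset) hFG'
  obtain ⟨I, hI⟩ := M.exists_isBasis (F : Set (Fin m)) hF.subset_ground
  obtain ⟨J, hJ, hIJ⟩ := hI.indep.subset_isBasis_of_subset
    (hI.subset.trans Set.subset_union_right) (hXF.trans hG.subset_ground)
  have hI' : (M ↾ (G : Set (Fin m))).IsBasis I ↑F :=
    (isBasis_restrict_iff hG.subset_ground).mpr ⟨hI, hFG'⟩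
  have hJ' : (M ↾ (G : Set (Fin m))).IsBasis J (X ∪ ↑F) :=
    (isBasis_restrict_iff hG.subset_ground).mpr ⟨hJ, hXF⟩
  have hJF : J ∩ ↑F = I := (hI.eq_of_subset_indep (hJ.indep.inter_right _)
    (Set.subset_inter hIJ hI.subset) Set.inter_subset_right).symm
  have hb := hJ'.contract_isBasis hI'
    (hJ'.indep.subset (Set.union_subset Set.sdiff_subset hIJ))
  rw [Set.union_sdiff_right, (Set.subset_sdiff.mp hX).2.sdiff_eq_left, ← Set.sdiff_self_inter,
    hJF] at hb
  rw [mMinor_eq, rk_eq_ncard hb, rk_eq_ncard hI, rk_eq_ncard hJ,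
    Set.ncard_sdiff_add_ncard_of_subset hIJ]

lemma mob_mMinor (hF : M.IsFlat ↑F) (hG : M.IsFlat ↑G) (hFG : F ⊆ G)
    (X : Finset (Fin m)) (hX : X ⊆ G \ F) :
    mob (flatsF (mMinor M ↑G ↑F)) ∅ X = mob (flatsF M) F (X ∪ F) := by
  induction X using Finset.strongInduction with
  | H X ih =>
    have hdisj : Disjoint X F := (Finset.subset_sdiff.mp hX).2
    rcases X.eq_empty_or_nonempty with rfl | hne
    · rw [mob_self, Finset.empty_union, mob_self]
    · have hFX : F ⊂ X ∪ F := by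
        refine Finset.ssubset_iff_subset_ne.mpr ⟨Finset.subset_union_right, fun h => ?_⟩
        exact hne.ne_empty (hdisj.eq_bot_of_le (Finset.union_eq_right.mp h.symm))
      rw [mob_of_ssubset (Finset.empty_ssubset.mpr hne), mob_of_ssubset hFX]
      congr 1
      refine Finset.sum_nbij' (fun Y => Y ∪ F) (fun H => H \ F) ?_ ?_ ?_ ?_ ?_
      · intro Y hY
        obtain ⟨h1, -, h3⟩ := Finset.mem_filter.mp hY
        rw [mem_flatsF, mMinor_isFlat_iff hF hG hFG] at h1
        refine Finset.mem_filter.mpr ⟨mem_flatsF.mpr (by simpa using h1.1),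
          Finset.subset_union_right, ?_⟩
        grind
      · intro H hH
        obtain ⟨h1, h2, h3⟩ := Finset.mem_filter.mp hH
        refine Finset.mem_filter.mpr ⟨?_, Finset.empty_subset _, ?_⟩
        · rw [mem_flatsF, mMinor_isFlat_iff hF hG hFG]
          rw [← Finset.coe_union, Finset.sdiff_union_of_subset h2, ← Finset.coe_sdiff,
            Finset.coe_subset]
          exact ⟨mem_flatsF.mp h1, by grind⟩
        · grind
      · intro Y hY
        grind
      · intro H hH
        grind
      · intro Y hY
        obtain ⟨h1, -, h3⟩ := Finset.mem_filter.mp hY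
        exact ih Y h3 (h3.subset.trans hX)

lemma betaInv_mMinor (hF : M.IsFlat ↑F) (hG : M.IsFlat ↑G) (hFG : F ⊆ G) :
    betaInv (mMinor M ↑G ↑F) = (-1) ^ (rk M ↑F + rk M ↑G) *
      intervalBeta (flatsF M) (fun H => (rk M ↑H : ℤ)) F G := by
  have hFG' : (F : Set (Fin m)) ⊆ G := Finset.coe_subset.mpr hFG
  rw [betaInv, if_pos (mMinor_loopless hF hG hFG)]
  congr 1
  · have h := rk_mMinor_add hF hG hFG (X := (mMinor M ↑G ↑F).E) mMinor_ground.subset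
    rw [mMinor_ground, Set.sdiff_union_of_subset hFG'] at h
    rw [← h, mMinor_ground, add_left_comm, pow_add, ← two_mul, pow_mul]
    simp
  · rw [intervalBeta]
    refine Finset.sum_nbij' (fun Y => Y ∪ F) (fun H => H \ F) ?_ ?_ ?_ ?_ ?_
    · intro Y hY
      rw [mem_flatsF, mMinor_isFlat_iff hF hG hFG, ← Finset.coe_sdiff, Finset.coe_subset] at hY
      refine mem_flatInterval.mpr ⟨mem_flatsF.mpr (by simpa using hY.1),
        Finset.subset_union_right, ?_⟩
      grind
    · intro H hH
      obtain ⟨h1, h2, h3⟩ := mem_flatInterval.mp hH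
      rw [mem_flatsF, mMinor_isFlat_iff hF hG hFG, ← Finset.coe_union,
        Finset.sdiff_union_of_subset h2, ← Finset.coe_sdiff, Finset.coe_subset]
      exact ⟨mem_flatsF.mp h1, by grind⟩
    · intro Y hY
      rw [mem_flatsF, mMinor_isFlat_iff hF hG hFG, ← Finset.coe_sdiff, Finset.coe_subset] at hY
      grind
    · intro H hH
      exact Finset.sdiff_union_of_subset (mem_flatInterval.mp hH).2.1
    · intro Y hY
      rw [mem_flatsF, mMinor_isFlat_iff hF hG hFG] at hY
      rw [mob_mMinor hF hG hFG Y (by exact_mod_cast hY.2), Finset.coe_union,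
        ← rk_mMinor_add hF hG hFG hY.2]
      push_cast
      ring

end Minors

/-- Balancing within one interval `[F, F']` of the lattice of flats. -/
lemma sum_betaInv_smul_eVec {m : ℕ} {M : Matroid (Fin m)} {F F' : Finset (Fin m)}
    (hF : M.IsFlat ↑F) (hF' : M.IsFlat ↑F') (hFF' : F ⊆ F') :
    ∃ a b : ℝ, ∑ G ∈ (flatsF M).filter (fun G => F ⊂ G ∧ G ⊂ F'),
      ((betaInv (mMinor M ↑G ↑F) * betaInv (mMinor M ↑F' ↑G) : ℤ) : ℝ) • eVec G =
        a • eVec F' + b • eVec F := by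
  set r : Finset (Fin m) → ℤ := fun H => (rk M ↑H : ℤ)
  set β := intervalBeta (flatsF M) r
  set s : ℤ := (-1) ^ (rk M ↑F + rk M ↑F')
  have hβ : ∀ G ∈ (flatsF M).filter (fun G => F ⊂ G ∧ G ⊂ F'),
      betaInv (mMinor M ↑G ↑F) * betaInv (mMinor M ↑F' ↑G) = s * (β F G * β G F') := by
    intro G hG
    obtain ⟨h1, h2, h3⟩ := Finset.mem_filter.mp hG
    rw [mem_flatsF] at h1
    rw [betaInv_mMinor hF h1 h2.subset, betaInv_mMinor h1 hF' h3.subset]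
    have hsq : ((-1 : ℤ) ^ rk M ↑G) * (-1) ^ rk M ↑G = 1 := by
      rw [← mul_pow]; simp
    simp only [s, pow_add, β, r]
    linear_combination ((-1) ^ rk M ↑F * (-1) ^ rk M ↑F' *
      (intervalBeta (flatsF M) (fun H => (rk M ↑H : ℤ)) F G *
        intervalBeta (flatsF M) (fun H => (rk M ↑H : ℤ)) G F')) * hsq
  obtain ⟨C, hC⟩ : ∃ C : ℤ, ∀ i ∈ F', i ∉ F →
      2 * ∑ G ∈ (flatsF M).filter (fun G => F ⊂ G ∧ G ⊂ F'),
        (if i ∈ G then β F G * β G F' else 0) = C :=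
    ⟨_, fun i hi hiF => (isRankedJoin_closure_insert (hF'.subset_ground
      (Finset.mem_coe.mpr hi))).two_mul_sum_intervalBeta_mul hiF (mem_flatsF.mpr hF') hi hFF'⟩
  refine ⟨s * C / 2, (∑ G ∈ (flatsF M).filter (fun G => F ⊂ G ∧ G ⊂ F'),
    (s * (β F G * β G F') : ℝ)) - s * C / 2, ?_⟩
  ext i
  simp only [Finset.sum_apply, Pi.smul_apply, Pi.add_apply, smul_eq_mul, eVec]
  rw [Finset.sum_congr rfl fun G hG => by rw [hβ G hG]]
  by_cases hiF : i ∈ F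
  · rw [if_pos hiF, if_pos (hFF' hiF), Finset.sum_congr rfl fun G hG => by
      rw [if_pos ((Finset.mem_filter.mp hG).2.1.subset hiF)]]
    push_cast
    simp
  · by_cases hi : i ∈ F'
    · rw [if_neg hiF, if_pos hi]
      have h := congrArg (fun z : ℤ => (z : ℝ)) (hC i hi hiF)
      simp only [Int.cast_mul, Int.cast_sum, Int.cast_ofNat] at h
      rw [← h, mul_one, mul_zero, add_zero, mul_left_comm, mul_div_cancel_left₀ _ two_ne_zero,
        Finset.mul_sum]
      refine Finset.sum_congr rfl fun G _ => ?_
      split_ifs <;> simp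
    · rw [if_neg hiF, if_neg hi, Finset.sum_congr rfl fun G hG => by
        rw [if_neg fun h => hi ((Finset.mem_filter.mp hG).2.2.subset h)]]
      simp

/-- Balancing of the `k`-th CSM cycle of a rank `d+1` loopless matroid `M`
on `{0,…,n}` at the cone of a chain of flats `∅ = F₀ ⊊ F₁ ⊊ ⋯ ⊊ F_{k-1} ⊊ F_k = E`:
the weighted sum `∑_G w(G)·e_G`, where `G` ranges over the flats with `F_i ⊊ G ⊊ F_{i+1}`
for some `i` and
`w(G) = (-1)^{d-k}·β(M|G/F_i)·β(M|F_{i+1}/G)·∏_{j ≠ i} β(M|F_{j+1}/F_j)`,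
lies in the span of `e_{F₁}, …, e_{F_{k-1}}, e_E`. -/
theorem csm_k_balanced {n d k : ℕ} (hk : 1 ≤ k) (hkd : k ≤ d)
    (M : Matroid (Fin (n + 1))) (hE : M.E = Set.univ) (hM : mLoopless M)
    (hrk : rk M M.E = d + 1)
    (Fc : Fin (k + 1) → Finset (Fin (n + 1)))
    (hmono : StrictMono Fc) (h0 : Fc 0 = ∅) (hlast : Fc (Fin.last k) = Finset.univ)
    (hflat : ∀ j, M.IsFlat ↑(Fc j)) :
    (∑ i : Fin k,
        ∑ G ∈ (flatsF M).filter (fun G => Fc i.castSucc ⊂ G ∧ G ⊂ Fc i.succ),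
          (((-1 : ℤ) ^ (d - k) *
            (betaInv (mMinor M ↑G ↑(Fc i.castSucc)) * betaInv (mMinor M ↑(Fc i.succ) ↑G) *
              ∏ j ∈ Finset.univ.erase i,
                betaInv (mMinor M ↑(Fc j.succ) ↑(Fc j.castSucc))) : ℤ) : ℝ) • eVec G)
      ∈ Submodule.span ℝ {v : Fin (n + 1) → ℝ | ∃ j : Fin k, v = eVec (Fc j.succ)} := by
  refine Submodule.sum_mem _ fun i _ => ?_
  have hlt : Fc i.castSucc ⊂ Fc i.succ := hmono (Fin.castSucc_lt_succ)
  obtain ⟨a, b, hab⟩ := sum_betaInv_smul_eVec (hflat i.castSucc) (hflat i.succ) hlt.subset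
  have hmem : eVec (Fc i.castSucc) ∈
      Submodule.span ℝ {v : Fin (n + 1) → ℝ | ∃ j : Fin k, v = eVec (Fc j.succ)} := by
    rcases Fin.eq_zero_or_eq_succ i.castSucc with h | ⟨j, h⟩
    · have hz : eVec (Fc i.castSucc) = 0 := by
        rw [h, h0]
        ext x
        simp [eVec]
      rw [hz]
      exact Submodule.zero_mem _
    · exact Submodule.subset_span ⟨j, by rw [h]⟩
  set c : ℤ := (-1 : ℤ) ^ (d - k) * ∏ j ∈ Finset.univ.erase i,
    betaInv (mMinor M ↑(Fc j.succ) ↑(Fc j.castSucc)) with hc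
  have hsum : ∑ G ∈ (flatsF M).filter (fun G => Fc i.castSucc ⊂ G ∧ G ⊂ Fc i.succ),
      (((-1 : ℤ) ^ (d - k) *
        (betaInv (mMinor M ↑G ↑(Fc i.castSucc)) * betaInv (mMinor M ↑(Fc i.succ) ↑G) *
          ∏ j ∈ Finset.univ.erase i,
            betaInv (mMinor M ↑(Fc j.succ) ↑(Fc j.castSucc))) : ℤ) : ℝ) • eVec G =
      (c : ℝ) • (a • eVec (Fc i.succ) + b • eVec (Fc i.castSucc)) := by
    rw [← hab, Finset.smul_sum]
    refine Finset.sum_congr rfl fun G _ => ?_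
    rw [smul_smul, ← Int.cast_mul, hc]
    congr 2
    ring
  rw [hsum]
  exact Submodule.smul_mem _ _ (Submodule.add_mem _
    (Submodule.smul_mem _ _ (Submodule.subset_span ⟨i, rfl⟩)) (Submodule.smul_mem _ _ hmem))
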